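/- Fix finite sets S (states) and 𝒜 (actions), a horizon H ∈ ℕ, and transition kernels {P_h}_{h∈[H]}. Let τ, L be positive integers with K = L·τ, let π¹,…,π^K be policies (with the convention π⁰ = π¹), let s¹,…,s^K ∈ S be initial states, and let f_h^k : S → ℝ (k ∈ [K], h ∈ [H]) satisfy |f_h^k(s)| ≤ 2H for all s. Then Σ_{l=1}^{L} Σ_{k=(l−1)τ+1}^{lτ} Σ_{h=1}^{H} ( E_{π^k}[ f_h^k(s_h) | s_1 = s^k ] − E_{π^{(l−1)τ+1}}[ f_h^k(s_h) | s_1 = s^k ] ) ≤ 2·τ·H² · Σ_{k=1}^{K} Σ_{h=1}^{H} max_{s∈S} ‖π_h^{k}(·|s) − π_h^{k−1}(·|s)‖₁. -/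

import Mathlib

/-!
The difference of two visitation distributions after `n` steps satisfies the one-step recursion
`v π (n+1) - v π' (n+1) = (v π n - v π' n) P^π + v π' n (P^π - P^π')`. Multiplication by the
stochastic matrix `P^π` does not increase the `ℓ¹` norm, and the second term has `ℓ¹` norm at most
`max_s ‖π(·|s) - π'(·|s)‖₁`; hence the `ℓ¹` distance of the two distributions is at most the sum of
these maxima over the steps (`visit_l1_le`).

With `|f| ≤ 2H`, passing from policy `t` to policy `t + 1` therefore moves each expectation by at
most `2H · V (t + 1)`, where `V t` sums the maxima over all steps. Telescoping from the first policy
of a period to policy `k` bounds each summand by `2H · ∑ V t` over the period (`expect_diff_le`).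
A period has `τ` episodes with `H` steps each, which gives the factor `τ · H · 2H`, and the periods
partition `{1, …, K}` (`sum_periods`).
-/

/-- `visit P π s₁ n` is the visitation distribution of `s_{n+1}` under
policy `π` started at `s₁`, i.e. `μ_{n+1}^π(·|s₁)`: the point mass at `s₁`
for `n = 0`, then pushed forward one step at a time by the one-step kernels
`P_h^π(s'|s) = ∑ₐ P_h(s'|s,a) π_h(a|s)`. -/
noncomputable def visit {S 𝒜 : Type*} [Fintype S] [Fintype 𝒜] [DecidableEq S]
    (P : ℕ → S → 𝒜 → S → ℝ) (π : ℕ → S → 𝒜 → ℝ) (s₁ : S) : ℕ → S → ℝ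
  | 0 => fun s => if s = s₁ then 1 else 0
  | n + 1 => fun s' =>
      ∑ s, visit P π s₁ n s * ∑ a, P (n + 1) s a s' * π (n + 1) s a

section Visitation

variable {S 𝒜 : Type*} [Fintype S] [Fintype 𝒜] [DecidableEq S]

theorem visit_nonneg {H : ℕ} {P : ℕ → S → 𝒜 → S → ℝ} {p : ℕ → S → 𝒜 → ℝ}
    (hP : ∀ h ∈ Finset.Icc 1 H, ∀ s a s', 0 ≤ P h s a s')
    (hp : ∀ h ∈ Finset.Icc 1 H, ∀ s a, 0 ≤ p h s a) (s₁ : S) :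
    ∀ n ≤ H, ∀ s, 0 ≤ visit P p s₁ n s := by
  intro n
  induction n with
  | zero => intro _ s; simp only [visit]; split_ifs <;> norm_num
  | succ n ih =>
    intro hn s'
    have hm : n + 1 ∈ Finset.Icc 1 H := Finset.mem_Icc.2 ⟨by omega, hn⟩
    exact Finset.sum_nonneg fun s _ => mul_nonneg (ih (by omega) s)
      (Finset.sum_nonneg fun a _ => mul_nonneg (hP _ hm s a s') (hp _ hm s a))

omit [DecidableEq S] in
/-- Total mass of a kernel applied to arbitrary weights `w s * q s a`: the next state is
summed out. -/
theorem sum_kernel_eq {Q : S → 𝒜 → S → ℝ} (hQ : ∀ s a, ∑ s', Q s a s' = 1)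
    (w : S → ℝ) (q : S → 𝒜 → ℝ) :
    ∑ s', ∑ s, w s * ∑ a, Q s a s' * q s a = ∑ s, w s * ∑ a, q s a := by
  rw [Finset.sum_comm]
  refine Finset.sum_congr rfl fun s _ => ?_
  rw [← Finset.mul_sum, Finset.sum_comm]
  congr 1
  refine Finset.sum_congr rfl fun a _ => ?_
  rw [← Finset.sum_mul, hQ, one_mul]

theorem visit_sum {H : ℕ} {P : ℕ → S → 𝒜 → S → ℝ} {p : ℕ → S → 𝒜 → ℝ}
    (hP : ∀ h ∈ Finset.Icc 1 H, ∀ s a, ∑ s', P h s a s' = 1)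
    (hp : ∀ h ∈ Finset.Icc 1 H, ∀ s, ∑ a, p h s a = 1) (s₁ : S) :
    ∀ n ≤ H, ∑ s, visit P p s₁ n s = 1 := by
  intro n
  induction n with
  | zero => intro _; simp [visit]
  | succ n ih =>
    intro hn
    have hm : n + 1 ∈ Finset.Icc 1 H := Finset.mem_Icc.2 ⟨by omega, hn⟩
    simp only [visit]
    rw [sum_kernel_eq (hP _ hm)]
    simp only [hp _ hm, mul_one]
    exact ih (by omega)

/-- The largest `ℓ¹` distance, over the states, of the action distributions of two one-step
policies. -/
noncomputable def polDist [Nonempty S] (p q : S → 𝒜 → ℝ) : ℝ :=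
  Finset.univ.sup' Finset.univ_nonempty (fun s => ∑ a, |p s a - q s a|)

omit [DecidableEq S] in
theorem le_polDist [Nonempty S] (p q : S → 𝒜 → ℝ) (s : S) :
    ∑ a, |p s a - q s a| ≤ polDist p q :=
  Finset.le_sup' (fun s => ∑ a, |p s a - q s a|) (Finset.mem_univ s)

omit [DecidableEq S] in
theorem polDist_nonneg [Nonempty S] (p q : S → 𝒜 → ℝ) : 0 ≤ polDist p q :=
  (Finset.sum_nonneg fun _ _ => abs_nonneg _).trans (le_polDist p q (Classical.arbitrary S))

/-- Visitation distributions are Lipschitz in the policy: one-step policy errors add up, since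
each stochastic step is an `ℓ¹` contraction. -/
theorem visit_l1_le [Nonempty S] {H : ℕ} {P : ℕ → S → 𝒜 → S → ℝ} {p q : ℕ → S → 𝒜 → ℝ}
    (hP : ∀ h ∈ Finset.Icc 1 H, ∀ s a s', 0 ≤ P h s a s')
    (hP1 : ∀ h ∈ Finset.Icc 1 H, ∀ s a, ∑ s', P h s a s' = 1)
    (hp : ∀ h ∈ Finset.Icc 1 H, ∀ s a, 0 ≤ p h s a)
    (hp1 : ∀ h ∈ Finset.Icc 1 H, ∀ s, ∑ a, p h s a = 1)
    (hq : ∀ h ∈ Finset.Icc 1 H, ∀ s a, 0 ≤ q h s a)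
    (hq1 : ∀ h ∈ Finset.Icc 1 H, ∀ s, ∑ a, q h s a = 1) (s₁ : S) :
    ∀ n ≤ H, ∑ s, |visit P p s₁ n s - visit P q s₁ n s| ≤
      ∑ h ∈ Finset.Icc 1 n, polDist (p h) (q h) := by
  intro n
  induction n with
  | zero => intro _; simp [visit]
  | succ n ih =>
    intro hn
    have hm : n + 1 ∈ Finset.Icc 1 H := Finset.mem_Icc.2 ⟨by omega, hn⟩
    have hq0 := visit_nonneg hP hq s₁ n (by omega)
    have key : ∀ s', |visit P p s₁ (n + 1) s' - visit P q s₁ (n + 1) s'| ≤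
        (∑ s, |visit P p s₁ n s - visit P q s₁ n s| * ∑ a, P (n + 1) s a s' * p (n + 1) s a) +
        ∑ s, visit P q s₁ n s *
          ∑ a, P (n + 1) s a s' * |p (n + 1) s a - q (n + 1) s a| := by
      intro s'
      have e : visit P p s₁ (n + 1) s' - visit P q s₁ (n + 1) s' =
          (∑ s, (visit P p s₁ n s - visit P q s₁ n s) *
            ∑ a, P (n + 1) s a s' * p (n + 1) s a) +
          ∑ s, visit P q s₁ n s *
            ∑ a, P (n + 1) s a s' * (p (n + 1) s a - q (n + 1) s a) := by
        simp only [visit, mul_sub, sub_mul, Finset.sum_sub_distrib]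
        ring
      rw [e]
      refine (abs_add_le _ _).trans (add_le_add ?_ ?_)
      · refine (Finset.abs_sum_le_sum_abs _ _).trans (Finset.sum_le_sum fun s _ => ?_)
        rw [abs_mul, abs_of_nonneg (Finset.sum_nonneg fun a _ =>
          mul_nonneg (hP _ hm s a s') (hp _ hm s a))]
      · refine (Finset.abs_sum_le_sum_abs _ _).trans (Finset.sum_le_sum fun s _ => ?_)
        rw [abs_mul, abs_of_nonneg (hq0 s)]
        refine mul_le_mul_of_nonneg_left ?_ (hq0 s)
        refine (Finset.abs_sum_le_sum_abs _ _).trans (Finset.sum_le_sum fun a _ => ?_)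
        rw [abs_mul, abs_of_nonneg (hP _ hm s a s')]
    refine (Finset.sum_le_sum fun s' _ => key s').trans ?_
    rw [Finset.sum_add_distrib, sum_kernel_eq (hP1 _ hm),
      sum_kernel_eq (hP1 _ hm) (visit P q s₁ n)
        (fun s a => |p (n + 1) s a - q (n + 1) s a|),
      Finset.sum_Icc_succ_top (by omega : 1 ≤ n + 1)]
    refine add_le_add ?_ ?_
    · simp only [hp1 _ hm, mul_one]
      exact ih (by omega)
    · refine (Finset.sum_le_sum fun s _ =>
        mul_le_mul_of_nonneg_left (le_polDist _ _ s) (hq0 s)).trans ?_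
      rw [← Finset.sum_mul, visit_sum hP1 hq1 s₁ n (by omega), one_mul]

/-- Replacing policy `j` by policy `k ≥ j` changes the expectation of a function bounded by `B`
by at most `B` times the total variation of the intermediate policies. -/
theorem expect_diff_le [Nonempty S] {H K : ℕ} {P : ℕ → S → 𝒜 → S → ℝ}
    {π : ℕ → ℕ → S → 𝒜 → ℝ}
    (hP : ∀ h ∈ Finset.Icc 1 H, ∀ s a s', 0 ≤ P h s a s')
    (hP1 : ∀ h ∈ Finset.Icc 1 H, ∀ s a, ∑ s', P h s a s' = 1)
    (hπ : ∀ k ∈ Finset.Icc 1 K, ∀ h ∈ Finset.Icc 1 H, ∀ s a, 0 ≤ π k h s a)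
    (hπ1 : ∀ k ∈ Finset.Icc 1 K, ∀ h ∈ Finset.Icc 1 H, ∀ s, ∑ a, π k h s a = 1)
    (s₁ : S) {n : ℕ} (hn : n ≤ H) {g : S → ℝ} {B : ℝ} (hB : 0 ≤ B) (hg : ∀ s, |g s| ≤ B)
    {j k : ℕ} (hj : 1 ≤ j) (hjk : j ≤ k) (hk : k ≤ K) :
    (∑ s, visit P (π k) s₁ n s * g s) - ∑ s, visit P (π j) s₁ n s * g s ≤
      B * ∑ t ∈ Finset.Icc (j + 1) k,
        ∑ h ∈ Finset.Icc 1 H, polDist (π t h) (π (t - 1) h) := by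
  induction k, hjk using Nat.le_induction with
  | base => simp
  | succ k hjk ih =>
    have h1 := ih (by omega)
    have mk : k ∈ Finset.Icc 1 K := Finset.mem_Icc.2 ⟨by omega, by omega⟩
    have mk1 : k + 1 ∈ Finset.Icc 1 K := Finset.mem_Icc.2 ⟨by omega, hk⟩
    have h2 := visit_l1_le hP hP1 (hπ _ mk1) (hπ1 _ mk1) (hπ _ mk) (hπ1 _ mk) s₁ n hn
    have h3 : ∑ h ∈ Finset.Icc 1 n, polDist (π (k + 1) h) (π k h) ≤
        ∑ h ∈ Finset.Icc 1 H, polDist (π (k + 1) h) (π k h) :=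
      Finset.sum_le_sum_of_subset_of_nonneg (Finset.Icc_subset_Icc_right hn)
        fun _ _ _ => polDist_nonneg _ _
    have h4 : (∑ s, visit P (π (k + 1)) s₁ n s * g s) - ∑ s, visit P (π k) s₁ n s * g s ≤
        B * ∑ s, |visit P (π (k + 1)) s₁ n s - visit P (π k) s₁ n s| := by
      rw [← Finset.sum_sub_distrib, Finset.mul_sum]
      refine Finset.sum_le_sum fun s _ => ?_
      rw [← sub_mul, mul_comm B]
      refine (le_abs_self _).trans ?_
      rw [abs_mul]
      exact mul_le_mul_of_nonneg_left (hg s) (abs_nonneg _)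
    have h5 := mul_le_mul_of_nonneg_left (h2.trans h3) hB
    rw [Finset.sum_Icc_succ_top (by omega : j + 1 ≤ k + 1), mul_add, Nat.add_sub_cancel]
    linarith

end Visitation

/-- The periods `{(l-1)τ+1, …, lτ}`, `1 ≤ l ≤ L`, partition `{1, …, Lτ}`. -/
theorem sum_periods (τ L : ℕ) (V : ℕ → ℝ) :
    ∑ l ∈ Finset.Icc 1 L, ∑ k ∈ Finset.Icc ((l - 1) * τ + 1) (l * τ), V k =
      ∑ k ∈ Finset.Icc 1 (L * τ), V k := by
  induction L with
  | zero => simp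
  | succ L ih =>
    rw [Finset.sum_Icc_succ_top (by omega), ih, Nat.add_sub_cancel]
    have e : ∀ a b : ℕ, Finset.Icc (a + 1) b = Finset.Ioc a b := fun a b => by
      ext x; simp only [Finset.mem_Icc, Finset.mem_Ioc]; omega
    rw [e (L * τ), show Finset.Icc 1 (L * τ) = Finset.Ioc 0 (L * τ) from e 0 _,
      show Finset.Icc 1 ((L + 1) * τ) = Finset.Ioc 0 ((L + 1) * τ) from e 0 _]
    exact Finset.sum_Ioc_consecutive V (Nat.zero_le _) (Nat.mul_le_mul_right τ (Nat.le_succ L))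

/-- Bound on the performance difference due to the varying policies within
each restart period (abstract form of the lemma on performance difference
with varying policies): comparing expectations under the episode-`k` policy
and under the policy at the start of its period is controlled by the total
variation of successive policies. -/
theorem performance_difference_varying_policies
    {S 𝒜 : Type*} [Fintype S] [Fintype 𝒜] [Nonempty S] [Nonempty 𝒜]
    [DecidableEq S]
    (H : ℕ)
    (P : ℕ → S → 𝒜 → S → ℝ)
    (hP_nonneg : ∀ h ∈ Finset.Icc 1 H, ∀ s a s', 0 ≤ P h s a s')
    (hP_sum : ∀ h ∈ Finset.Icc 1 H, ∀ s a, ∑ s', P h s a s' = 1)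
    (τ L K : ℕ) (hτ : 0 < τ) (hL : 0 < L) (hK : K = L * τ)
    (π : ℕ → ℕ → S → 𝒜 → ℝ)
    (hπ_nonneg : ∀ k ∈ Finset.Icc 1 K, ∀ h ∈ Finset.Icc 1 H, ∀ s a,
      0 ≤ π k h s a)
    (hπ_sum : ∀ k ∈ Finset.Icc 1 K, ∀ h ∈ Finset.Icc 1 H, ∀ s,
      ∑ a, π k h s a = 1)
    (hπ0 : π 0 = π 1)
    (sInit : ℕ → S)
    (f : ℕ → ℕ → S → ℝ)
    (hf : ∀ k ∈ Finset.Icc 1 K, ∀ h ∈ Finset.Icc 1 H, ∀ s,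
      |f k h s| ≤ 2 * H) :
    ∑ l ∈ Finset.Icc 1 L, ∑ k ∈ Finset.Icc ((l - 1) * τ + 1) (l * τ),
        ∑ h ∈ Finset.Icc 1 H,
          ((∑ s, visit P (π k) (sInit k) (h - 1) s * f k h s) -
            ∑ s, visit P (π ((l - 1) * τ + 1)) (sInit k) (h - 1) s * f k h s) ≤
      2 * τ * (H : ℝ) ^ 2 *
        ∑ k ∈ Finset.Icc 1 K, ∑ h ∈ Finset.Icc 1 H,
          Finset.univ.sup' Finset.univ_nonempty
            (fun s => ∑ a, |π k h s a - π (k - 1) h s a|) := by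
  subst hK
  change _ ≤ 2 * τ * (H : ℝ) ^ 2 * ∑ k ∈ Finset.Icc 1 (L * τ),
    ∑ h ∈ Finset.Icc 1 H, polDist (π k h) (π (k - 1) h)
  rw [← sum_periods, Finset.mul_sum]
  refine Finset.sum_le_sum fun l hl => ?_
  obtain ⟨hl1, hlL⟩ := Finset.mem_Icc.1 hl
  set W : ℝ := ∑ k ∈ Finset.Icc ((l - 1) * τ + 1) (l * τ),
    ∑ h ∈ Finset.Icc 1 H, polDist (π k h) (π (k - 1) h) with hW
  have hlt : l * τ ≤ L * τ := Nat.mul_le_mul_right τ hlL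
  have hterm : ∀ k ∈ Finset.Icc ((l - 1) * τ + 1) (l * τ), ∀ h ∈ Finset.Icc 1 H,
      ((∑ s, visit P (π k) (sInit k) (h - 1) s * f k h s) -
        ∑ s, visit P (π ((l - 1) * τ + 1)) (sInit k) (h - 1) s * f k h s) ≤ 2 * H * W := by
    intro k hk h hh
    obtain ⟨hk1, hk2⟩ := Finset.mem_Icc.1 hk
    obtain ⟨_, hh2⟩ := Finset.mem_Icc.1 hh
    refine (expect_diff_le hP_nonneg hP_sum hπ_nonneg hπ_sum (sInit k) (by omega : h - 1 ≤ H)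
      (by positivity : (0 : ℝ) ≤ 2 * H)
      (hf k (Finset.mem_Icc.2 ⟨by omega, by omega⟩) h hh)
      (by omega) hk1 (by omega)).trans ?_
    refine mul_le_mul_of_nonneg_left ?_ (by positivity)
    exact Finset.sum_le_sum_of_subset_of_nonneg
      (Finset.Icc_subset_Icc (by omega) hk2)
      fun _ _ _ => Finset.sum_nonneg fun _ _ => polDist_nonneg _ _
  refine (Finset.sum_le_sum fun k hk => Finset.sum_le_sum (hterm k hk)).trans ?_
  have hcard : l * τ + 1 - ((l - 1) * τ + 1) = τ := by
    obtain ⟨m, rfl⟩ : ∃ m, l = m + 1 := ⟨l - 1, by omega⟩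
    rw [Nat.add_sub_cancel, Nat.add_mul, one_mul]
    omega
  simp only [Finset.sum_const, Nat.card_Icc, hcard, Nat.add_sub_cancel, nsmul_eq_mul]
  apply le_of_eq
  ring
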